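/- arXiv:2111.07114 — 2 statements merged into one kernel-verified Lean document; each statement's English description precedes it below -/
import Mathlib

section
/- (H² estimate for the Stokes system) Let (u,v,p) be a smooth solution of the Stokes system on Ω=[0,2π]×[r_0,1]: −ε²(ru_{rr}+u_{θθ}/r+2v_θ/r+u_r−u/r)+p_θ=f_u, −ε²(rv_{rr}+v_{θθ}/r−2u_θ/r+v_r−v/r)+rp_r=g_v, u_θ+∂_r(rv)=0, with (u,v) 2π-periodic in θ and u=v=0 on r=r_0 and r=1. Then ∫_{r_0}^{1}∫₀^{2π}[(u_{θθ}+v_θ)²+(v_{θθ}−u_θ)²]dθdr + ∫_{r_0}^{1}∫₀^{2π}(u_{rθ}²+v_{rθ}²)dθdr ≤ (C/ε²)|∫_{r_0}^{1}∫₀^{2π}(f_u u_{θθ}+g_v v_{θθ})dθdr|. -/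
open Real MeasureTheory Filter Set

noncomputable section

/-- Partial derivative in the first (angular) variable. -/
def Dθ (u : ℝ → ℝ → ℝ) : ℝ → ℝ → ℝ := fun x y => deriv (fun t => u t y) x

/-- Partial derivative in the second (radial / boundary-layer) variable. -/
def Dr (u : ℝ → ℝ → ℝ) : ℝ → ℝ → ℝ := fun x y => deriv (fun s => u x s) y

/-- Joint smoothness of a function of two real variables. -/
def Smooth2 (u : ℝ → ℝ → ℝ) : Prop := ContDiff ℝ (⊤ : ℕ∞) (fun q : ℝ × ℝ => u q.1 q.2)

/-- `2π`-periodicity in the first (angular) variable. -/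
def Periodic2 (u : ℝ → ℝ → ℝ) : Prop := ∀ x y, u (x + 2 * π) y = u x y

/-- The profile `ũ_e(r) = ã₀ r + b̃₀/r + c̃₀ r ln r`. -/
def tildeU (ta tb tc : ℝ) : ℝ → ℝ := fun r => ta * r + tb / r + tc * r * Real.log r

/-- The shear Euler profile `u_{e,δ}(r) = a₀ r + b₀/r + δ ũ_e(r)`. -/
def shearProfile (a0 b0 δ ta tb tc : ℝ) : ℝ → ℝ :=
  fun r => a0 * r + b0 / r + δ * tildeU ta tb tc r

/-- Double integral over the annulus domain `Ω = [0,2π] × [r₀,1]`. -/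
def dblInt (r0 : ℝ) (F : ℝ → ℝ → ℝ) : ℝ :=
  ∫ r in r0..(1:ℝ), ∫ θ in (0:ℝ)..(2 * π), F θ r


lemma sm_hasT {w : ℝ → ℝ → ℝ} (hw : Smooth2 w) (x y : ℝ) :
    HasDerivAt (fun t => w t y) (Dθ w x y) x := by
  have h : ContDiff ℝ (⊤ : ℕ∞) (fun t => w t y) :=
    ContDiff.comp (g := fun q : ℝ × ℝ => w q.1 q.2) hw (contDiff_id.prodMk contDiff_const)
  exact ((h.differentiable (by simp)) x).hasDerivAt

lemma sm_hasR {w : ℝ → ℝ → ℝ} (hw : Smooth2 w) (x y : ℝ) :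
    HasDerivAt (fun s => w x s) (Dr w x y) y := by
  have h : ContDiff ℝ (⊤ : ℕ∞) (fun s => w x s) :=
    ContDiff.comp (g := fun q : ℝ × ℝ => w q.1 q.2) hw (contDiff_const.prodMk contDiff_id)
  exact ((h.differentiable (by simp)) y).hasDerivAt

lemma Dθ_eq {w : ℝ → ℝ → ℝ} (hw : Smooth2 w) (x y : ℝ) :
    Dθ w x y = fderiv ℝ (fun q : ℝ × ℝ => w q.1 q.2) (x, y) (1, 0) := by
  have h1 : HasFDerivAt (fun q : ℝ × ℝ => w q.1 q.2) _ (x, y) :=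
    (hw.differentiable (by simp) (x, y)).hasFDerivAt
  have h2 : HasDerivAt (fun t : ℝ => (t, y)) ((1 : ℝ), (0 : ℝ)) x :=
    (hasDerivAt_id x).prodMk (hasDerivAt_const x y)
  exact (HasFDerivAt.comp_hasDerivAt x h1 h2).deriv

lemma Dr_eq {w : ℝ → ℝ → ℝ} (hw : Smooth2 w) (x y : ℝ) :
    Dr w x y = fderiv ℝ (fun q : ℝ × ℝ => w q.1 q.2) (x, y) (0, 1) := by
  have h1 : HasFDerivAt (fun q : ℝ × ℝ => w q.1 q.2) _ (x, y) :=
    (hw.differentiable (by simp) (x, y)).hasFDerivAt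
  have h2 : HasDerivAt (fun t : ℝ => (x, t)) ((0 : ℝ), (1 : ℝ)) y :=
    (hasDerivAt_const y x).prodMk (hasDerivAt_id y)
  exact (HasFDerivAt.comp_hasDerivAt y h1 h2).deriv

lemma sm_fd {w : ℝ → ℝ → ℝ} (hw : Smooth2 w) :
    ContDiff ℝ (⊤ : ℕ∞) (fderiv ℝ (fun q : ℝ × ℝ => w q.1 q.2)) :=
  ContDiff.fderiv_right (m := (⊤ : ℕ∞)) hw (by simp)

lemma sm_T {w : ℝ → ℝ → ℝ} (hw : Smooth2 w) : Smooth2 (Dθ w) := by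
  unfold Smooth2
  have : (fun q : ℝ × ℝ => Dθ w q.1 q.2)
      = fun q => fderiv ℝ (fun q : ℝ × ℝ => w q.1 q.2) q (1, 0) := by
    funext q; exact Dθ_eq hw q.1 q.2
  rw [this]
  exact (sm_fd hw).clm_apply contDiff_const

lemma sm_R {w : ℝ → ℝ → ℝ} (hw : Smooth2 w) : Smooth2 (Dr w) := by
  unfold Smooth2
  have : (fun q : ℝ × ℝ => Dr w q.1 q.2)
      = fun q => fderiv ℝ (fun q : ℝ × ℝ => w q.1 q.2) q (0, 1) := by
    funext q; exact Dr_eq hw q.1 q.2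
  rw [this]
  exact (sm_fd hw).clm_apply contDiff_const

lemma sm_comm {w : ℝ → ℝ → ℝ} (hw : Smooth2 w) : Dr (Dθ w) = Dθ (Dr w) := by
  funext x y
  rw [Dr_eq (sm_T hw), Dθ_eq (sm_R hw)]
  have e1 : (fun q : ℝ × ℝ => Dθ w q.1 q.2)
      = fun q => fderiv ℝ (fun q : ℝ × ℝ => w q.1 q.2) q (1, 0) := by
    funext q; exact Dθ_eq hw q.1 q.2
  have e2 : (fun q : ℝ × ℝ => Dr w q.1 q.2)
      = fun q => fderiv ℝ (fun q : ℝ × ℝ => w q.1 q.2) q (0, 1) := by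
    funext q; exact Dr_eq hw q.1 q.2
  have hd : DifferentiableAt ℝ (fderiv ℝ (fun q : ℝ × ℝ => w q.1 q.2)) (x, y) :=
    (sm_fd hw).differentiable (by simp) _
  rw [e1, e2, fderiv_clm_apply hd (by fun_prop), fderiv_clm_apply hd (by fun_prop)]
  have hs : IsSymmSndFDerivAt ℝ (fun q : ℝ × ℝ => w q.1 q.2) (x, y) :=
    ContDiffAt.isSymmSndFDerivAt (n := (⊤ : ℕ∞)) (ContDiff.contDiffAt hw)
      (by simpa using (WithTop.coe_le_coe.2 (le_top : (2 : ℕ∞) ≤ ⊤)))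
  have := hs (0, 1) (1, 0)
  simpa using this

lemma per_T {w : ℝ → ℝ → ℝ} (hw : Periodic2 w) : Periodic2 (Dθ w) := by
  intro x y
  unfold Dθ
  rw [← deriv_comp_add_const]
  congr 1
  funext t
  exact hw t y

lemma per_R {w : ℝ → ℝ → ℝ} (hw : Periodic2 w) : Periodic2 (Dr w) := by
  intro x y
  unfold Dr
  congr 1
  funext t
  exact hw x t

lemma zero_T {w : ℝ → ℝ → ℝ} {a : ℝ} (hw : ∀ θ, w θ a = 0) (θ : ℝ) : Dθ w θ a = 0 := by
  unfold Dθ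
  simp [hw]

lemma sm_cont {w : ℝ → ℝ → ℝ} (hw : Smooth2 w) : Continuous (fun q : ℝ × ℝ => w q.1 q.2) :=
  ContDiff.continuous hw

lemma sm_comp {X : Type*} [TopologicalSpace X] {w : ℝ → ℝ → ℝ} (hw : Smooth2 w) {f g : X → ℝ}
    (hf : Continuous f) (hg : Continuous g) : Continuous (fun z => w (f z) (g z)) :=
  (sm_cont hw).comp (hf.prodMk hg)

lemma intervalIntegral_swap_of_cont (a b c d : ℝ) (hab : a ≤ b) (hcd : c ≤ d) (G : ℝ → ℝ → ℝ)
    (hG : Continuous (fun q : ℝ × ℝ => G q.1 q.2)) :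
    (∫ r in a..b, ∫ θ in c..d, G θ r) = ∫ θ in c..d, ∫ r in a..b, G θ r := by
  simp only [intervalIntegral.integral_of_le hab, intervalIntegral.integral_of_le hcd]
  apply MeasureTheory.integral_integral_swap
  rw [Measure.prod_restrict]
  have hc : Continuous (Function.uncurry fun r θ => G θ r) :=
    hG.comp (continuous_snd.prodMk continuous_fst)
  have hi : IntegrableOn (Function.uncurry fun r θ => G θ r) (Icc a b ×ˢ Icc c d)
      ((volume : Measure ℝ).prod (volume : Measure ℝ)) :=
    hc.continuousOn.integrableOn_compact (isCompact_Icc.prod isCompact_Icc)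
  exact hi.mono_set (Set.prod_mono Ioc_subset_Icc_self Ioc_subset_Icc_self)

/-- Abstract integral step. -/
lemma dbl_step (r0 c : ℝ) (hr : r0 ≤ 1) (K1 K2 F B' : ℝ → ℝ → ℝ) (A A' B : ℝ → ℝ → ℝ)
    (hc : 0 ≤ c)
    (cK1 : Continuous (fun q : ℝ × ℝ => K1 q.1 q.2))
    (cK2 : Continuous (fun q : ℝ × ℝ => K2 q.1 q.2))
    (cF : Continuous (fun q : ℝ × ℝ => F q.1 q.2))
    (cB : Continuous (fun q : ℝ × ℝ => B' q.1 q.2))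
    (cA : ∀ r, Continuous (fun t => A' t r))
    (hA : ∀ t r, HasDerivAt (fun t => A t r) (A' t r) t)
    (hB : ∀ t r, HasDerivAt (fun s => B t s) (B' t r) r)
    (pA : ∀ r, A (2 * π) r = A 0 r)
    (B1 : ∀ t, B t 1 = 0) (B0 : ∀ t, B t r0 = 0)
    (hle : ∀ t r, r ∈ Icc r0 1 → K1 t r + K2 t r ≤ c * (A' t r + B' t r - F t r)) :
    dblInt r0 K1 + dblInt r0 K2 ≤ c * |dblInt r0 F| := by
  have inner : ∀ G : ℝ → ℝ → ℝ, Continuous (fun q : ℝ × ℝ => G q.1 q.2) →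
      Continuous (fun r => ∫ θ in (0:ℝ)..(2 * π), G θ r) := by
    intro G hG
    apply intervalIntegral.continuous_parametric_intervalIntegral_of_continuous'
    exact hG.comp (continuous_snd.prodMk continuous_fst)
  have sl : ∀ G : ℝ → ℝ → ℝ, Continuous (fun q : ℝ × ℝ => G q.1 q.2) → ∀ r,
      IntervalIntegrable (fun θ => G θ r) volume 0 (2 * π) := by
    intro G hG r
    exact (hG.comp (continuous_id.prodMk continuous_const)).intervalIntegrable _ _
  have ii : ∀ G : ℝ → ℝ → ℝ, Continuous (fun q : ℝ × ℝ => G q.1 q.2) →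
      IntervalIntegrable (fun r => ∫ θ in (0:ℝ)..(2 * π), G θ r) volume r0 1 :=
    fun G hG => (inner G hG).intervalIntegrable _ _
  have hBz : dblInt r0 B' = 0 := by
    unfold dblInt
    rw [intervalIntegral_swap_of_cont _ _ _ _ hr (by positivity) _ cB]
    have : ∀ θ, ∫ r in r0..(1:ℝ), B' θ r = 0 := by
      intro θ
      rw [intervalIntegral.integral_eq_sub_of_hasDerivAt (fun s _ => hB θ s)
        ((cB.comp (continuous_const.prodMk continuous_id)).intervalIntegrable _ _), B1, B0, sub_self]
    simp [this]
  have hpt : ∀ r ∈ Icc r0 1, (∫ θ in (0:ℝ)..(2 * π), K1 θ r) + (∫ θ in (0:ℝ)..(2 * π), K2 θ r)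
      ≤ c * ((∫ θ in (0:ℝ)..(2 * π), B' θ r) - ∫ θ in (0:ℝ)..(2 * π), F θ r) := by
    intro r hr'
    have hAz : ∫ θ in (0:ℝ)..(2 * π), A' θ r = 0 := by
      rw [intervalIntegral.integral_eq_sub_of_hasDerivAt (fun t _ => hA t r)
        ((cA r).intervalIntegrable _ _), pA, sub_self]
    have iA := (cA r).intervalIntegrable (μ := volume) 0 (2 * π)
    have e : (∫ θ in (0:ℝ)..(2 * π), c * (A' θ r + B' θ r - F θ r))
        = c * ((∫ θ in (0:ℝ)..(2 * π), B' θ r) - ∫ θ in (0:ℝ)..(2 * π), F θ r) := by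
      rw [intervalIntegral.integral_const_mul,
        intervalIntegral.integral_sub (iA.add (sl _ cB r)) (sl _ cF r),
        intervalIntegral.integral_add iA (sl _ cB r), hAz, zero_add]
    rw [← e, ← intervalIntegral.integral_add (sl _ cK1 r) (sl _ cK2 r)]
    apply intervalIntegral.integral_mono_on (by positivity)
      ((sl _ cK1 r).add (sl _ cK2 r)) (((iA.add (sl _ cB r)).sub (sl _ cF r)).const_mul c)
    intro t _
    exact hle t r hr'
  have main : dblInt r0 K1 + dblInt r0 K2 ≤ c * (dblInt r0 B' - dblInt r0 F) := by
    unfold dblInt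
    rw [← intervalIntegral.integral_add (ii _ cK1) (ii _ cK2),
      ← intervalIntegral.integral_sub (ii _ cB) (ii _ cF), ← intervalIntegral.integral_const_mul]
    exact intervalIntegral.integral_mono_on hr ((ii _ cK1).add (ii _ cK2))
      (((ii _ cB).sub (ii _ cF)).const_mul c) hpt
  rw [hBz, zero_sub] at main
  exact main.trans (mul_le_mul_of_nonneg_left (neg_le_abs _) hc)

/-- **"H²-type" estimate for the Stokes system** on the annulus `Ω = [0,2π] × [r₀,1]`:
for any smooth `2π`-periodic solution `(u,v,p)` of the Stokes system with no-slip boundary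
conditions,
`∫∫ [(u_θθ + v_θ)² + (v_θθ − u_θ)²] + ∫∫ (u_rθ² + v_rθ²) ≤ (C/ε²)|∫∫ (f_u u_θθ + g_v v_θθ)|`. -/
theorem stokes_H2_estimate
    (r0 : ℝ) (hr0 : 0 < r0) (hr01 : r0 < 1) :
    ∃ C : ℝ, 0 < C ∧
      ∀ ε : ℝ, 0 < ε →
      ∀ u v p fu gv : ℝ → ℝ → ℝ,
        Smooth2 u → Smooth2 v → Smooth2 p → Smooth2 fu → Smooth2 gv →
        Periodic2 u → Periodic2 v → Periodic2 p → Periodic2 fu → Periodic2 gv →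
        (∀ θ r, r ∈ Icc r0 1 →
          -ε ^ 2 * (r * Dr (Dr u) θ r + Dθ (Dθ u) θ r / r + 2 * Dθ v θ r / r
              + Dr u θ r - u θ r / r)
            + Dθ p θ r = fu θ r) →
        (∀ θ r, r ∈ Icc r0 1 →
          -ε ^ 2 * (r * Dr (Dr v) θ r + Dθ (Dθ v) θ r / r - 2 * Dθ u θ r / r
              + Dr v θ r - v θ r / r)
            + r * Dr p θ r = gv θ r) →
        (∀ θ r, r ∈ Icc r0 1 → Dθ u θ r + Dr (fun t s => s * v t s) θ r = 0) →
        (∀ θ, u θ 1 = 0) → (∀ θ, v θ 1 = 0) →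
        (∀ θ, u θ r0 = 0) → (∀ θ, v θ r0 = 0) →
        dblInt r0 (fun θ r =>
            (Dθ (Dθ u) θ r + Dθ v θ r) ^ 2 + (Dθ (Dθ v) θ r - Dθ u θ r) ^ 2)
          + dblInt r0 (fun θ r => (Dr (Dθ u) θ r) ^ 2 + (Dr (Dθ v) θ r) ^ 2)
          ≤ (C / ε ^ 2) *
            |dblInt r0 (fun θ r => fu θ r * Dθ (Dθ u) θ r + gv θ r * Dθ (Dθ v) θ r)| := by
  refine ⟨1 / r0, by positivity, ?_⟩
  intro ε hε u v p fu gv su sv sp sf sg pu pv pp _ _ e1 e2 e3 u1 v1 u0 v0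
  rw [div_div]
  have suT := sm_T su
  have svT := sm_T sv
  have suTT := sm_T suT
  have svTT := sm_T svT
  have suR := sm_R su
  have svR := sm_R sv
  have suRT := sm_T suR
  have svRT := sm_T svR
  have cu := sm_comm su
  have cv := sm_comm sv
  have cuu : Dr (Dθ (Dθ u)) = Dθ (Dθ (Dr u)) := by rw [sm_comm suT, cu]
  have cvv : Dr (Dθ (Dθ v)) = Dθ (Dθ (Dr v)) := by rw [sm_comm svT, cv]
  -- divergence identities
  have d0 : ∀ r, r ∈ Icc r0 1 → ∀ θ, Dθ u θ r + (v θ r + r * Dr v θ r) = 0 := by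
    intro r hr θ
    have h := ((hasDerivAt_id r).mul (sm_hasR sv θ r)).deriv
    have h' : Dr (fun t s => s * v t s) θ r = 1 * v θ r + r * Dr v θ r := h
    have := e3 θ r hr
    rw [h'] at this
    linarith
  have d1 : ∀ r, r ∈ Icc r0 1 → ∀ θ, Dθ (Dθ u) θ r + (Dθ v θ r + r * Dθ (Dr v) θ r) = 0 := by
    intro r hr θ
    have h := (sm_hasT suT θ r).add ((sm_hasT sv θ r).add ((sm_hasT svR θ r).const_mul r))
    refine h.unique ?_
    exact (hasDerivAt_const θ (0 : ℝ)).congr_of_eventuallyEq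
      (Eventually.of_forall fun t => d0 r hr t)
  have d2 : ∀ r, r ∈ Icc r0 1 → ∀ θ, Dθ (Dθ (Dθ u)) θ r
      + (Dθ (Dθ v) θ r + r * Dθ (Dθ (Dr v)) θ r) = 0 := by
    intro r hr θ
    have h := (sm_hasT suTT θ r).add ((sm_hasT svT θ r).add ((sm_hasT svRT θ r).const_mul r))
    refine h.unique ?_
    exact (hasDerivAt_const θ (0 : ℝ)).congr_of_eventuallyEq
      (Eventually.of_forall fun t => d1 r hr t)
  refine dbl_step r0 _ hr01.le _ _ _
    (fun t r => 1 * (p t r * Dθ (Dθ v) t r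
        - ε ^ 2 * (Dr u t r * Dθ (Dθ u) t r + Dr v t r * Dθ (Dθ v) t r))
      + r * ((Dr p t r * Dθ (Dθ v) t r + p t r * Dr (Dθ (Dθ v)) t r)
        - ε ^ 2 * ((Dr (Dr u) t r * Dθ (Dθ u) t r + Dr u t r * Dr (Dθ (Dθ u)) t r)
          + (Dr (Dr v) t r * Dθ (Dθ v) t r + Dr v t r * Dr (Dθ (Dθ v)) t r))))
    (fun t r => p t r * Dθ (Dθ u) t r
      + ε ^ 2 * (r * (Dr u t r * Dθ (Dr u) t r + Dr v t r * Dθ (Dr v) t r)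
        + r⁻¹ * (u t r * Dθ u t r + v t r * Dθ v t r)))
    (fun t r => (Dθ p t r * Dθ (Dθ u) t r + p t r * Dθ (Dθ (Dθ u)) t r)
      + ε ^ 2 * (r * ((Dθ (Dr u) t r * Dθ (Dr u) t r + Dr u t r * Dθ (Dθ (Dr u)) t r)
          + (Dθ (Dr v) t r * Dθ (Dr v) t r + Dr v t r * Dθ (Dθ (Dr v)) t r))
        + r⁻¹ * ((Dθ u t r * Dθ u t r + u t r * Dθ (Dθ u) t r)
          + (Dθ v t r * Dθ v t r + v t r * Dθ (Dθ v) t r))))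
    (fun t r => r * (p t r * Dθ (Dθ v) t r
        - ε ^ 2 * (Dr u t r * Dθ (Dθ u) t r + Dr v t r * Dθ (Dθ v) t r)))
    (by positivity) ?_ ?_ ?_ ?_ ?_ ?_ ?_ ?_ ?_ ?_ ?_
  · have := sm_cont suT; have := sm_cont svT; have := sm_cont suTT; have := sm_cont svTT
    fun_prop
  · have := sm_cont (sm_R suT); have := sm_cont (sm_R svT)
    fun_prop
  · have := sm_cont sf; have := sm_cont sg; have := sm_cont suTT; have := sm_cont svTT
    fun_prop
  · have := sm_cont sp; have := sm_cont (sm_R sp); have := sm_cont suTT; have := sm_cont svTT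
    have := sm_cont (sm_R suTT); have := sm_cont (sm_R svTT)
    have := sm_cont suR; have := sm_cont svR
    have := sm_cont (sm_R suR); have := sm_cont (sm_R svR)
    fun_prop
  · intro r
    have key : ∀ {w : ℝ → ℝ → ℝ}, Smooth2 w → Continuous (fun t => w t r) :=
      fun hw => sm_comp hw continuous_id continuous_const
    have := key sp; have := key (sm_T sp); have := key suTT; have := key (sm_T suTT)
    have := key suR; have := key svR; have := key suRT; have := key svRT
    have := key (sm_T suRT); have := key (sm_T svRT)
    have := key su; have := key sv; have := key suT; have := key svT; have := key svTT
    fun_prop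
  · intro t r
    exact ((sm_hasT sp t r).mul (sm_hasT suTT t r)).add
      (((((sm_hasT suR t r).mul (sm_hasT suRT t r)).add
        ((sm_hasT svR t r).mul (sm_hasT svRT t r))).const_mul r).add
       ((((sm_hasT su t r).mul (sm_hasT suT t r)).add
        ((sm_hasT sv t r).mul (sm_hasT svT t r))).const_mul r⁻¹) |>.const_mul (ε ^ 2))
  · intro t r
    exact (hasDerivAt_id r).mul (((sm_hasR sp t r).mul (sm_hasR svTT t r)).sub
      ((((sm_hasR suR t r).mul (sm_hasR suTT t r)).add
        ((sm_hasR svR t r).mul (sm_hasR svTT t r))).const_mul (ε ^ 2)))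
  · intro r
    have key : ∀ {w : ℝ → ℝ → ℝ}, Periodic2 w → w (2 * π) r = w 0 r := by
      intro w hw
      simpa using hw 0 r
    simp only [key pu, key pv, key pp, key (per_T pu), key (per_T pv), key (per_T (per_T pu)),
      key (per_R pu), key (per_R pv), key (per_T (per_R pu)), key (per_T (per_R pv))]
  · intro t
    simp [zero_T (zero_T u1), zero_T (zero_T v1)]
  · intro t
    simp [zero_T (zero_T u0), zero_T (zero_T v0)]
  · intro t r hr
    have hrp : 0 < r := hr0.trans_le hr.1
    have h2 := d2 r hr t
    simp only [cu, cv, cuu, cvv]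
    rw [← e1 t r hr, ← e2 t r hr]
    have hpd : p t r * (Dθ (Dθ (Dθ u)) t r
      + (Dθ (Dθ v) t r + r * Dθ (Dθ (Dr v)) t r)) = 0 := by rw [h2, mul_zero]
    generalize Dθ (Dθ (Dθ u)) t r = uttt at *
    generalize Dθ (Dθ (Dr v)) t r = vrtt at *
    generalize Dθ (Dθ (Dr u)) t r = urtt at *
    set K1 := (Dθ (Dθ u) t r + Dθ v t r) ^ 2 + (Dθ (Dθ v) t r - Dθ u t r) ^ 2 with hK1
    set K2 := (Dθ (Dr u) t r) ^ 2 + (Dθ (Dr v) t r) ^ 2 with hK2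
    have hK1n : 0 ≤ K1 := by positivity
    have hK2n : 0 ≤ K2 := by positivity
    have hle : K1 + K2 ≤ 1 / (r0 * ε ^ 2) * (ε ^ 2 * (r * K2 + K1 / r)) := by
      have : 1 / (r0 * ε ^ 2) * (ε ^ 2 * (r * K2 + K1 / r)) = r / r0 * K2 + 1 / (r0 * r) * K1 := by
        field_simp
      rw [this]
      have a1 : 1 ≤ r / r0 := by rw [le_div_iff₀ hr0]; linarith [hr.1]
      have a2 : 1 ≤ 1 / (r0 * r) := by
        rw [le_div_iff₀ (by positivity)]; nlinarith [hr.2]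
      nlinarith [mul_le_mul_of_nonneg_right a1 hK2n, mul_le_mul_of_nonneg_right a2 hK1n]
    refine hle.trans (le_of_eq ?_)
    congr 1
    rw [hK1, hK2]
    simp only [div_eq_mul_inv]
    linear_combination -hpd
end
end

section
/- (Anisotropic Sobolev embedding) Let u,v be smooth functions on [0,2π]×[r_0,1], 2π-periodic in θ, with u=v=0 on r=1 and r=r_0. Then ‖(u,v)‖_{L^∞} ≤ C(‖(u_θ,v_θ)‖_{L²}+‖(u_r,v_r)‖_{L²}+‖(u_{rθ},v_{rθ})‖_{L²}), where norms are taken over Ω=[0,2π]×[r_0,1]. -/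
open Real MeasureTheory Filter Set

noncomputable section

lemma aux_hasDθ {u : ℝ → ℝ → ℝ} (hu : Smooth2 u) (x y : ℝ) :
    HasDerivAt (fun t => u t y) (fderiv ℝ (fun q : ℝ × ℝ => u q.1 q.2) (x, y) (1, 0)) x := by
  have h1 : HasFDerivAt (fun q : ℝ × ℝ => u q.1 q.2)
      (fderiv ℝ (fun q : ℝ × ℝ => u q.1 q.2) (x, y)) (x, y) :=
    ((hu.differentiable (by simp)) (x, y)).hasFDerivAt
  have h2 : HasDerivAt (fun t : ℝ => (t, y)) ((1 : ℝ), (0 : ℝ)) x :=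
    (hasDerivAt_id x).prodMk (hasDerivAt_const x y)
  exact h1.comp_hasDerivAt x h2

lemma aux_hasDr {u : ℝ → ℝ → ℝ} (hu : Smooth2 u) (x y : ℝ) :
    HasDerivAt (fun s => u x s) (fderiv ℝ (fun q : ℝ × ℝ => u q.1 q.2) (x, y) (0, 1)) y := by
  have h1 : HasFDerivAt (fun q : ℝ × ℝ => u q.1 q.2)
      (fderiv ℝ (fun q : ℝ × ℝ => u q.1 q.2) (x, y)) (x, y) :=
    ((hu.differentiable (by simp)) (x, y)).hasFDerivAt
  have h2 : HasDerivAt (fun t : ℝ => (x, t)) ((0 : ℝ), (1 : ℝ)) y :=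
    (hasDerivAt_const y x).prodMk (hasDerivAt_id y)
  exact h1.comp_hasDerivAt y h2

lemma aux_smooth_fderiv {u : ℝ → ℝ → ℝ} (hu : Smooth2 u) (w : ℝ × ℝ) :
    ContDiff ℝ (⊤ : ℕ∞) (fun q => fderiv ℝ (fun q : ℝ × ℝ => u q.1 q.2) q w) := by
  have h : ContDiff ℝ (⊤ : ℕ∞) (fderiv ℝ (fun q : ℝ × ℝ => u q.1 q.2)) :=
    hu.fderiv_right (by simp)
  exact h.clm_apply contDiff_const

lemma aux_smoothDθ {u : ℝ → ℝ → ℝ} (hu : Smooth2 u) : Smooth2 (Dθ u) := by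
  have h := aux_smooth_fderiv hu (1, 0)
  have e : (fun q : ℝ × ℝ => Dθ u q.1 q.2) =
      (fun q => fderiv ℝ (fun q : ℝ × ℝ => u q.1 q.2) q (1, 0)) := by
    funext q
    exact (aux_hasDθ hu q.1 q.2).deriv
  unfold Smooth2
  rw [e]; exact h

lemma aux_smoothDr {u : ℝ → ℝ → ℝ} (hu : Smooth2 u) : Smooth2 (Dr u) := by
  have h := aux_smooth_fderiv hu (0, 1)
  have e : (fun q : ℝ × ℝ => Dr u q.1 q.2) =
      (fun q => fderiv ℝ (fun q : ℝ × ℝ => u q.1 q.2) q (0, 1)) := by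
    funext q
    exact (aux_hasDr hu q.1 q.2).deriv
  unfold Smooth2
  rw [e]; exact h

/-- Cauchy-Schwarz on an interval. -/
lemma aux_cs {h : ℝ → ℝ} (hc : Continuous h) {a b : ℝ} (hab : a ≤ b) :
    (∫ t in a..b, h t) ^ 2 ≤ (b - a) * ∫ t in a..b, h t ^ 2 := by
  rcases hab.eq_or_lt with rfl | hlt
  · simp
  set I := ∫ t in a..b, h t with hI
  set J := ∫ t in a..b, h t ^ 2 with hJ
  have hp : 0 < b - a := sub_pos.2 hlt
  have key : 0 ≤ ∫ t in a..b, ((b - a) * h t - I) ^ 2 :=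
    intervalIntegral.integral_nonneg hab (fun t _ => sq_nonneg _)
  have e : ∫ t in a..b, ((b - a) * h t - I) ^ 2 =
      (b - a) ^ 2 * J - 2 * (b - a) * I * I + (b - a) * I ^ 2 := by
    have e1 : ∀ t, ((b - a) * h t - I) ^ 2 =
      (b - a) ^ 2 * h t ^ 2 - 2 * (b - a) * I * h t + I ^ 2 := fun t => by ring
    simp_rw [e1]
    rw [intervalIntegral.integral_add, intervalIntegral.integral_sub,
      intervalIntegral.integral_const_mul, intervalIntegral.integral_const_mul,
      intervalIntegral.integral_const, smul_eq_mul]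
    all_goals exact Continuous.intervalIntegrable (by fun_prop) _ _
  rw [e] at key
  have : 0 ≤ (b - a) * ((b - a) * J - I ^ 2) := by nlinarith
  have := nonneg_of_mul_nonneg_right this hp
  linarith

/-- Pointwise bound by `L²` of the derivative, for functions on `[a,b]`. -/
lemma aux_diff {f f' : ℝ → ℝ} (hf : ∀ x, HasDerivAt f (f' x) x) (hc : Continuous f')
    {a b x y : ℝ} (hx : x ∈ Icc a b) (hy : y ∈ Icc a b) (hxy : x ≤ y) :
    (f y - f x) ^ 2 ≤ (b - a) * ∫ t in a..b, f' t ^ 2 := by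
  have e : ∫ t in x..y, f' t = f y - f x :=
    intervalIntegral.integral_eq_sub_of_hasDerivAt (fun t _ => hf t) (hc.intervalIntegrable _ _)
  rw [← e]
  refine (aux_cs hc hxy).trans ?_
  have h1 : ∫ t in x..y, f' t ^ 2 ≤ ∫ t in a..b, f' t ^ 2 :=
    intervalIntegral.integral_mono_interval hx.1 hxy hy.2
      (Eventually.of_forall fun t => sq_nonneg _)
      (Continuous.intervalIntegrable (by fun_prop) _ _)
  have h0 : 0 ≤ ∫ t in x..y, f' t ^ 2 :=
    intervalIntegral.integral_nonneg hxy (fun t _ => sq_nonneg _)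
  have h2 := hx.1
  have h3 := hy.2
  exact mul_le_mul (by linarith) h1 h0 (by linarith)

lemma aux_diff' {f f' : ℝ → ℝ} (hf : ∀ x, HasDerivAt f (f' x) x) (hc : Continuous f')
    {a b x y : ℝ} (hx : x ∈ Icc a b) (hy : y ∈ Icc a b) :
    (f y - f x) ^ 2 ≤ (b - a) * ∫ t in a..b, f' t ^ 2 := by
  rcases le_total x y with h | h
  · exact aux_diff hf hc hx hy h
  · have := aux_diff hf hc hy hx h
    nlinarith

/-- One-dimensional Sobolev embedding on `[0, 2π]`. -/
lemma aux_sob {f f' : ℝ → ℝ} (hf : ∀ x, HasDerivAt f (f' x) x) (hc : Continuous f')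
    {x : ℝ} (hx : x ∈ Icc 0 (2 * π)) :
    (f x) ^ 2 ≤ 16 * ((∫ t in (0:ℝ)..(2 * π), f t ^ 2) + ∫ t in (0:ℝ)..(2 * π), f' t ^ 2) := by
  have hfc : Continuous f := continuous_iff_continuousAt.2 fun t => (hf t).continuousAt
  set J := ∫ t in (0:ℝ)..(2 * π), f' t ^ 2 with hJ
  have hpi : (0:ℝ) ≤ 2 * π := by positivity
  have h0 : 0 ≤ ∫ t in (0:ℝ)..(2 * π), f t ^ 2 :=
    intervalIntegral.integral_nonneg hpi (fun t _ => sq_nonneg _)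
  have h1 : 0 ≤ J := intervalIntegral.integral_nonneg hpi (fun t _ => sq_nonneg _)
  have hpt : ∀ t ∈ Icc (0:ℝ) (2 * π), f x ^ 2 ≤ 2 * f t ^ 2 + 4 * π * J := by
    intro t ht
    have := aux_diff' hf hc ht hx
    rw [← hJ] at this
    nlinarith [sq_nonneg (f x - 2 * f t)]
  have hint : ∫ t in (0:ℝ)..(2 * π), f x ^ 2 ≤ ∫ t in (0:ℝ)..(2 * π), (2 * f t ^ 2 + 4 * π * J) :=
    intervalIntegral.integral_mono_on hpi (by simp)
      (Continuous.intervalIntegrable (by fun_prop) _ _) hpt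
  rw [intervalIntegral.integral_add (Continuous.intervalIntegrable (by fun_prop) _ _)
    (Continuous.intervalIntegrable (by fun_prop) _ _),
    intervalIntegral.integral_const_mul, intervalIntegral.integral_const,
    intervalIntegral.integral_const, smul_eq_mul, smul_eq_mul] at hint
  have p3 := Real.pi_gt_three
  have p4 := Real.pi_le_four
  set I := ∫ t in (0:ℝ)..(2 * π), f t ^ 2
  have : 0 ≤ π * (16 * (I + J) - f x ^ 2) := by
    nlinarith [mul_nonneg h0 (by linarith : 0 ≤ π - 3),
      mul_nonneg (mul_nonneg h1 Real.pi_pos.le) (by linarith : 0 ≤ 4 - π)]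
  have := nonneg_of_mul_nonneg_right this Real.pi_pos
  linarith

lemma aux_cont {u : ℝ → ℝ → ℝ} (hu : Smooth2 u) :
    Continuous (fun q : ℝ × ℝ => u q.1 q.2) := hu.continuous

lemma aux_cont1 {u : ℝ → ℝ → ℝ} (hu : Smooth2 u) (y : ℝ) : Continuous (fun t => u t y) :=
  (aux_cont hu).comp (by fun_prop : Continuous fun t : ℝ => (t, y))

lemma aux_cont2 {u : ℝ → ℝ → ℝ} (hu : Smooth2 u) (x : ℝ) : Continuous (fun t => u x t) :=
  (aux_cont hu).comp (by fun_prop : Continuous fun t : ℝ => (x, t))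

/-- Slice bound: `∫ w(t,r)² dt ≤ ∬ w_r²` for `w` vanishing on `r = r0`. -/
lemma aux_slice {r0 : ℝ} (hr0 : 0 < r0) (hr01 : r0 < 1) {w : ℝ → ℝ → ℝ} (hw : Smooth2 w)
    (hb : ∀ t, w t r0 = 0) {r : ℝ} (hr : r ∈ Icc r0 1) :
    ∫ t in (0:ℝ)..(2 * π), w t r ^ 2 ≤ dblInt r0 (fun x y => Dr w x y ^ 2) := by
  have hpi : (0:ℝ) ≤ 2 * π := by positivity
  have hs := aux_smoothDr hw
  have hcc : Continuous (fun q : ℝ × ℝ => Dr w q.1 q.2 ^ 2) := (aux_cont hs).pow 2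
  have hswap : dblInt r0 (fun x y => Dr w x y ^ 2) =
      ∫ t in (0:ℝ)..(2 * π), ∫ s in r0..(1:ℝ), Dr w t s ^ 2 := by
    unfold dblInt
    refine intervalIntegral_intervalIntegral_swap ?_
    have hi : IntegrableOn (fun q : ℝ × ℝ => Dr w q.2 q.1 ^ 2)
        (Icc r0 1 ×ˢ Icc 0 (2 * π)) :=
      ((hcc.comp continuous_swap).continuousOn).integrableOn_compact (isCompact_Icc.prod isCompact_Icc)
    rw [uIoc_of_le hr01.le, uIoc_of_le hpi]
    exact hi.mono_set (prod_mono Ioc_subset_Icc_self Ioc_subset_Icc_self)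
  rw [hswap]
  refine intervalIntegral.integral_mono_on hpi ?_ ?_ ?_
  · exact ((aux_cont1 hw r).pow 2).intervalIntegrable _ _
  · exact (intervalIntegral.continuous_parametric_intervalIntegral_of_continuous' hcc _ _).intervalIntegrable _ _
  · intro t _
    have hd : ∀ y, HasDerivAt (fun s => w t s) (Dr w t y) y := fun y =>
      (aux_hasDr hw t y).differentiableAt.hasDerivAt
    have h := aux_diff' hd (aux_cont2 hs t) (left_mem_Icc.2 hr01.le) hr
    have h0 : 0 ≤ ∫ s in r0..(1:ℝ), Dr w t s ^ 2 :=
      intervalIntegral.integral_nonneg hr01.le (fun t _ => sq_nonneg _)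
    simp only [hb, sub_zero] at h
    nlinarith

lemma aux_mono {r0 : ℝ} (hr01 : r0 < 1) {F G : ℝ → ℝ → ℝ}
    (hF : Continuous (fun q : ℝ × ℝ => F q.1 q.2)) (hG : Continuous (fun q : ℝ × ℝ => G q.1 q.2))
    (h : ∀ x y, F x y ≤ G x y) : dblInt r0 F ≤ dblInt r0 G := by
  have hpi : (0:ℝ) ≤ 2 * π := by positivity
  have key : ∀ F : ℝ → ℝ → ℝ, Continuous (fun q : ℝ × ℝ => F q.1 q.2) →
      Continuous (fun r => ∫ θ in (0:ℝ)..(2 * π), F θ r) := fun F hF =>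
    intervalIntegral.continuous_parametric_intervalIntegral_of_continuous'
      (f := fun r θ => F θ r) (hF.comp continuous_swap) _ _
  have k1 : ∀ F : ℝ → ℝ → ℝ, Continuous (fun q : ℝ × ℝ => F q.1 q.2) → ∀ r,
      Continuous (fun t => F t r) := fun F hF r =>
    hF.comp (by fun_prop : Continuous fun t : ℝ => (t, r))
  unfold dblInt
  refine intervalIntegral.integral_mono_on hr01.le ((key F hF).intervalIntegrable _ _)
    ((key G hG).intervalIntegrable _ _) fun r _ => ?_
  exact intervalIntegral.integral_mono_on hpi ((k1 F hF r).intervalIntegrable _ _)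
    ((k1 G hG r).intervalIntegrable _ _) fun t _ => h t r

lemma aux_main {r0 : ℝ} (hr0 : 0 < r0) (hr01 : r0 < 1) {u : ℝ → ℝ → ℝ} (hu : Smooth2 u)
    (hper : Periodic2 u) (hb : ∀ t, u t r0 = 0) (θ r : ℝ) (hr : r ∈ Icc r0 1) :
    u θ r ^ 2 ≤ 16 * (dblInt r0 (fun x y => Dr u x y ^ 2)
      + dblInt r0 (fun x y => Dr (Dθ u) x y ^ 2)) := by
  have hp : Function.Periodic (fun t => u t r) (2 * π) := fun t => hper t r
  obtain ⟨x, hx, hxe⟩ := hp.exists_mem_Ico₀ Real.two_pi_pos θ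
  have hxe' : u θ r = u x r := hxe
  rw [hxe']
  have hs := aux_smoothDθ hu
  have hd : ∀ y, HasDerivAt (fun t => u t r) (Dθ u y r) y := fun y =>
    (aux_hasDθ hu y r).differentiableAt.hasDerivAt
  have h := aux_sob hd (aux_cont1 hs r) (Ico_subset_Icc_self hx)
  have hbθ : ∀ t, Dθ u t r0 = 0 := by
    intro t
    simp [Dθ, hb]
  have h1 := aux_slice hr0 hr01 hu hb hr
  have h2 := aux_slice hr0 hr01 hs hbθ hr
  linarith

lemma aux_final {x A B D : ℝ} (hA : 0 ≤ A) (hB : 0 ≤ B) (hD : 0 ≤ D)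
    (h : x ^ 2 ≤ 16 * (A + B)) : |x| ≤ 4 * (D + √A + √B) := by
  refine abs_le_of_sq_le_sq ?_ (by positivity)
  have a := Real.sq_sqrt hA
  have b := Real.sq_sqrt hB
  have h1 : 0 ≤ √A * √B := by positivity
  have h2 : 0 ≤ D * √A := by positivity
  have h3 : 0 ≤ D * √B := by positivity
  nlinarith [sq_nonneg D]

/-- **Anisotropic Sobolev embedding** on the annulus `Ω = [0,2π] × [r₀,1]`:
for smooth `2π`-periodic `(u,v)` vanishing on both boundary circles,
`‖(u,v)‖_∞ ≤ C(‖(u_θ,v_θ)‖₂ + ‖(u_r,v_r)‖₂ + ‖(u_rθ,v_rθ)‖₂)`. -/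
theorem anisotropic_sobolev_embedding
    (r0 : ℝ) (hr0 : 0 < r0) (hr01 : r0 < 1) :
    ∃ C : ℝ, 0 < C ∧
      ∀ u v : ℝ → ℝ → ℝ,
        Smooth2 u → Smooth2 v → Periodic2 u → Periodic2 v →
        (∀ θ, u θ 1 = 0) → (∀ θ, v θ 1 = 0) →
        (∀ θ, u θ r0 = 0) → (∀ θ, v θ r0 = 0) →
        ∀ θ r : ℝ, r ∈ Icc r0 1 →
          max |u θ r| |v θ r| ≤
            C * (Real.sqrt (dblInt r0 (fun x y => (Dθ u x y) ^ 2 + (Dθ v x y) ^ 2))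
              + Real.sqrt (dblInt r0 (fun x y => (Dr u x y) ^ 2 + (Dr v x y) ^ 2))
              + Real.sqrt (dblInt r0 (fun x y => (Dr (Dθ u) x y) ^ 2 + (Dr (Dθ v) x y) ^ 2))) := by
  refine ⟨4, by norm_num, ?_⟩
  intro u v hu hv pu pv _ _ bu bv θ r hr
  have nn : ∀ F : ℝ → ℝ → ℝ, (∀ x y, 0 ≤ F x y) → 0 ≤ dblInt r0 F := fun F hF =>
    intervalIntegral.integral_nonneg hr01.le fun s _ =>
      intervalIntegral.integral_nonneg Real.two_pi_pos.le fun t _ => hF t s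
  have c1 := (aux_cont (aux_smoothDr hu)).pow 2
  have c2 := (aux_cont (aux_smoothDr hv)).pow 2
  have c3 := (aux_cont (aux_smoothDr (aux_smoothDθ hu))).pow 2
  have c4 := (aux_cont (aux_smoothDr (aux_smoothDθ hv))).pow 2
  have hA := nn (fun x y => (Dr u x y) ^ 2 + (Dr v x y) ^ 2) (fun x y => by positivity)
  have hB := nn (fun x y => (Dr (Dθ u) x y) ^ 2 + (Dr (Dθ v) x y) ^ 2) (fun x y => by positivity)
  refine max_le (aux_final hA hB (Real.sqrt_nonneg _) ?_) (aux_final hA hB (Real.sqrt_nonneg _) ?_)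
  · have h := aux_main hr0 hr01 hu pu bu θ r hr
    have h1 : dblInt r0 (fun x y => Dr u x y ^ 2) ≤
        dblInt r0 (fun x y => (Dr u x y) ^ 2 + (Dr v x y) ^ 2) :=
      aux_mono hr01 c1 (c1.add c2) fun x y => le_add_of_nonneg_right (sq_nonneg _)
    have h2 : dblInt r0 (fun x y => Dr (Dθ u) x y ^ 2) ≤
        dblInt r0 (fun x y => (Dr (Dθ u) x y) ^ 2 + (Dr (Dθ v) x y) ^ 2) :=
      aux_mono hr01 c3 (c3.add c4) fun x y => le_add_of_nonneg_right (sq_nonneg _)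
    linarith
  · have h := aux_main hr0 hr01 hv pv bv θ r hr
    have h1 : dblInt r0 (fun x y => Dr v x y ^ 2) ≤
        dblInt r0 (fun x y => (Dr u x y) ^ 2 + (Dr v x y) ^ 2) :=
      aux_mono hr01 c2 (c1.add c2) fun x y => le_add_of_nonneg_left (sq_nonneg _)
    have h2 : dblInt r0 (fun x y => Dr (Dθ v) x y ^ 2) ≤
        dblInt r0 (fun x y => (Dr (Dθ u) x y) ^ 2 + (Dr (Dθ v) x y) ^ 2) :=
      aux_mono hr01 c4 (c3.add c4) fun x y => le_add_of_nonneg_left (sq_nonneg _)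
    linarith
end
end
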